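/- arXiv:1311.5256 — 2 statements merged into one kernel-verified Lean document; each statement's English description precedes it below -/
import Mathlib

section
/- Let R be an algebraic curvature operator on ℝ⁴. The quadratic form η ↦ ⟨Rη,η⟩ on Λ²₊ is 2-positive (i.e. ⟨Rη,η⟩ + ⟨Rζ,ζ⟩ > 0 for all η,ζ ∈ Λ²₊ with |η| = |ζ| = 1 and ⟨η,ζ⟩ = 0) if and only if (scal(R)/6)·|η|² − ⟨W₊η,η⟩ > 0 for every nonzero η ∈ Λ²₊. -/
noncomputable section

open scoped ComplexConjugate

/-- `ℝ⁴` with its standard basis. -/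
abbrev V4 := Fin 4 → ℝ
/-- `Λ²ℝ⁴` in the coordinates given by the basis
`e₁∧e₂, e₁∧e₃, e₁∧e₄, e₂∧e₃, e₂∧e₄, e₃∧e₄` (0-indexed). -/
abbrev L6 := Fin 6 → ℝ
/-- Endomorphisms of `Λ²ℝ⁴`, as `6×6` matrices. -/
abbrev M6 := Fin 6 → Fin 6 → ℝ

/-- standard basis of ℝ⁴ -/
def std4 (i : Fin 4) : V4 := fun j => if j = i then 1 else 0

/-- the standard inner product of ℝ⁴ -/
def ip4 (x y : V4) : ℝ := ∑ i, x i * y i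

/-- the index pairs for the basis of Λ²ℝ⁴ -/
def pr : Fin 6 → Fin 4 × Fin 4 := ![(0,1),(0,2),(0,3),(1,2),(1,3),(2,3)]

/-- the wedge product `x ∧ y` of two vectors, in coordinates.  With this
coordinate expression, the standard inner product `ip6` below satisfies
`⟨x∧y, z∧t⟩ = ⟨x,z⟩⟨y,t⟩ − ⟨x,t⟩⟨y,z⟩`. -/
def wedge (x y : V4) : L6 := fun k => x (pr k).1 * y (pr k).2 - x (pr k).2 * y (pr k).1

/-- the inner product of Λ²ℝ⁴ -/
def ip6 (a b : L6) : ℝ := ∑ k, a k * b k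

/-- The Hodge star operator on Λ²ℝ⁴. -/
def hodge (w : L6) : L6 := ![w 5, -(w 4), w 3, w 2, -(w 1), w 0]

/-- self-dual 2-forms (the +1 eigenspace Λ²₊ of the Hodge star) -/
def SelfDual (w : L6) : Prop := hodge w = w
/-- anti-self-dual 2-forms (the −1 eigenspace Λ²₋ of the Hodge star) -/
def AntiSelfDual (w : L6) : Prop := hodge w = -w

/-- application of an endomorphism (matrix) of Λ²ℝ⁴ to a 2-form -/
def appM (A : M6) (w : L6) : L6 := fun k => ∑ l, A k l * w l

/-- symmetry of an endomorphism of Λ²ℝ⁴ w.r.t. the inner product -/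
def IsSymm6 (A : M6) : Prop := ∀ a b : L6, ip6 (appM A a) b = ip6 a (appM A b)

/-- the first Bianchi identity -/
def Bianchi (A : M6) : Prop := ∀ x y z t : V4,
  ip6 (appM A (wedge x y)) (wedge z t) + ip6 (appM A (wedge z x)) (wedge y t)
    + ip6 (appM A (wedge y z)) (wedge x t) = 0

/-- algebraic curvature operators on ℝ⁴ : symmetric endomorphisms of Λ²ℝ⁴
satisfying the first Bianchi identity.  The set of these is `S²_BΛ²ℝ⁴`. -/
def IsCurvOp (A : M6) : Prop := IsSymm6 A ∧ Bianchi A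

/-- the scalar curvature: twice the trace -/
def scal (A : M6) : ℝ := 2 * ∑ k, A k k

/-- orthogonal projection P₊ of Λ²ℝ⁴ onto Λ²₊ -/
def pplus (w : L6) : L6 := (1/2 : ℝ) • (w + hodge w)

/-- the self-dual Weyl part W₊ of a curvature operator, as a map on Λ²₊:
`W₊η = P₊(Rη) − (scal(R)/12)·η`. -/
def Wplus (A : M6) (η : L6) : L6 := pplus (appM A η) - (scal A / 12) • η

/-- `R` is PIC₊ : the quadratic form `η ↦ ⟨Rη,η⟩` on Λ²₊ is 2-positive. -/
def PICp (A : M6) : Prop := ∀ η ζ : L6, SelfDual η → SelfDual ζ →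
  ip6 η η = 1 → ip6 ζ ζ = 1 → ip6 η ζ = 0 →
  0 < ip6 (appM A η) η + ip6 (appM A ζ) ζ

/-- `R` is NNIC₊ : the quadratic form `η ↦ ⟨Rη,η⟩` on Λ²₊ is 2-nonnegative. -/
def NNICp (A : M6) : Prop := ∀ η ζ : L6, SelfDual η → SelfDual ζ →
  ip6 η η = 1 → ip6 ζ ζ = 1 → ip6 η ζ = 0 →
  0 ≤ ip6 (appM A η) η + ip6 (appM A ζ) ζ

/-- `R` is PIC₋ : the quadratic form `η ↦ ⟨Rη,η⟩` on Λ²₋ is 2-positive. -/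
def PICm (A : M6) : Prop := ∀ η ζ : L6, AntiSelfDual η → AntiSelfDual ζ →
  ip6 η η = 1 → ip6 ζ ζ = 1 → ip6 η ζ = 0 →
  0 < ip6 (appM A η) η + ip6 (appM A ζ) ζ

/-- `R` is NNIC₋ : the quadratic form `η ↦ ⟨Rη,η⟩` on Λ²₋ is 2-nonnegative. -/
def NNICm (A : M6) : Prop := ∀ η ζ : L6, AntiSelfDual η → AntiSelfDual ζ →
  ip6 η η = 1 → ip6 ζ ζ = 1 → ip6 η ζ = 0 →
  0 ≤ ip6 (appM A η) η + ip6 (appM A ζ) ζ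

/- ### complexifications -/

/-- `ℂ⁴` -/
abbrev VC4 := Fin 4 → ℂ
/-- `Λ²ℂ⁴` -/
abbrev LC6 := Fin 6 → ℂ

/-- the wedge product on ℂ⁴ -/
def wedgeC (x y : VC4) : LC6 := fun k => x (pr k).1 * y (pr k).2 - x (pr k).2 * y (pr k).1

/-- the complex-bilinear extension of the inner product of ℝ⁴ -/
def bilC4 (x y : VC4) : ℂ := ∑ i, x i * y i

/-- the complex-bilinear extension of the inner product of Λ²ℝ⁴ -/
def bilC6 (a b : LC6) : ℂ := ∑ k, a k * b k

/-- the Hermitian inner product `⟨·,·⟩_h` on Λ²ℂ⁴ associated to the real inner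
product on Λ²ℝ⁴ -/
def hermC6 (a b : LC6) : ℂ := ∑ k, a k * conj (b k)

/-- the complex-linear extension of an endomorphism of Λ²ℝ⁴ to Λ²ℂ⁴ -/
def appMC (A : M6) (w : LC6) : LC6 := fun k => ∑ l, (A k l : ℂ) * w l

/-- the complex-linear extension of the Hodge star -/
def hodgeC (w : LC6) : LC6 := ![w 5, -(w 4), w 3, w 2, -(w 1), w 0]

/-- membership in `Λ²₊ ⊗ ℂ` -/
def SelfDualC (w : LC6) : Prop := hodgeC w = w



/-!
Let `T` be an endomorphism of a Euclidean space of dimension `n + 1`. If `u` is the unit vector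
completing an orthonormal family `v₁, …, vₙ` to an orthonormal basis, then
`∑ ⟨T vᵢ, vᵢ⟩ = tr T - ⟨T u, u⟩`; so all the sums on the left are positive exactly when
`(tr T)|x|² - ⟨T x, x⟩ > 0` for all `x ≠ 0`. Apply this with `n = 2` to the compression `P₊R` of `R`
to `Λ²₊`. Since `P₊ = (1 + *)/2`, its trace is `(tr R + tr (* ∘ R))/2`, and the Bianchi identity
gives `tr (* ∘ R) = 0`, so the trace is `scal(R)/4`. As `⟨W₊η, η⟩ = ⟨Rη, η⟩ - (scal(R)/12)|η|²` on
`Λ²₊`, this turns the criterion into the one in terms of `W₊`.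
-/

open Module LinearMap

section Orthonormal

lemma exists_orthonormalBasis_apply_eq {𝕜 E ι κ : Type*} [RCLike 𝕜] [NormedAddCommGroup E]
    [InnerProductSpace 𝕜 E] [FiniteDimensional 𝕜 E] [Fintype ι]
    (hι : finrank 𝕜 E = Fintype.card ι) {f : κ → ι} (hf : f.Injective) {v : κ → E}
    (hv : Orthonormal 𝕜 v) : ∃ b : OrthonormalBasis ι 𝕜 E, ∀ k, b (f k) = v k := by
  have hext : Orthonormal 𝕜 ((Set.range f).domRestrict (Function.extend f v 0)) := by
    convert hv.comp _ (Equiv.ofInjective f hf).symm.injective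
    ext ⟨_, k, rfl⟩
    simp [hf.extend_apply]
  obtain ⟨b, hb⟩ := hext.exists_orthonormalBasis_extension_of_card_eq hι
  exact ⟨b, fun k ↦ by rw [hb _ ⟨k, rfl⟩, hf.extend_apply]⟩

variable {E : Type*} [NormedAddCommGroup E] [InnerProductSpace ℝ E]

lemma orthonormal_fin_two_iff {v : Fin 2 → E} :
    Orthonormal ℝ v ↔
      inner ℝ (v 0) (v 0) = 1 ∧ inner ℝ (v 1) (v 1) = 1 ∧ inner ℝ (v 0) (v 1) = 0 := by
  simp only [orthonormal_iff_ite, Fin.forall_fin_two, real_inner_comm (v 0) (v 1),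
    if_true, Fin.isValue, zero_ne_one, one_ne_zero, if_false]
  tauto

end Orthonormal

section SumOfQuadraticForm

variable {E : Type*} [NormedAddCommGroup E] [InnerProductSpace ℝ E] {n : ℕ}

lemma sum_inner_orthonormalBasis_succ (T : E →ₗ[ℝ] E)
    (b : OrthonormalBasis (Fin (n + 1)) ℝ E) :
    ∑ i : Fin n, inner ℝ (T (b i.succ)) (b i.succ) =
      trace ℝ E T - inner ℝ (T (b 0)) (b 0) := by
  simp only [trace_eq_sum_inner T b, Fin.sum_univ_succ, real_inner_comm (T _), add_sub_cancel_left]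

lemma forall_ne_zero_inner_pos_iff_forall_norm_eq_one (T : E →ₗ[ℝ] E) (c : ℝ) :
    (∀ x, x ≠ 0 → 0 < c * inner ℝ x x - inner ℝ (T x) x) ↔
      ∀ u, ‖u‖ = 1 → 0 < c - inner ℝ (T u) u := by
  constructor
  · intro h u hu
    simpa only [real_inner_self_eq_norm_sq, hu, one_pow, mul_one]
      using h u (norm_ne_zero_iff.1 (hu ▸ one_ne_zero))
  · intro h x hx
    have hx₀ : 0 < ‖x‖ := norm_pos_iff.2 hx
    have hunit : ‖‖x‖⁻¹ • x‖ = 1 := norm_smul_inv_norm hx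
    calc 0 < ‖x‖ ^ 2 * (c - inner ℝ (T (‖x‖⁻¹ • x)) (‖x‖⁻¹ • x)) :=
          mul_pos (pow_pos hx₀ 2) (h _ hunit)
      _ = c * inner ℝ x x - inner ℝ (T x) x := by
          rw [map_smul, real_inner_smul_left, real_inner_smul_right, real_inner_self_eq_norm_sq]
          field_simp

theorem forall_orthonormal_sum_inner_pos_iff [FiniteDimensional ℝ E]
    (hn : finrank ℝ E = n + 1) (T : E →ₗ[ℝ] E) :
    (∀ v : Fin n → E, Orthonormal ℝ v → 0 < ∑ i, inner ℝ (T (v i)) (v i)) ↔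
      ∀ x, x ≠ 0 → 0 < trace ℝ E T * inner ℝ x x - inner ℝ (T x) x := by
  have hcard : finrank ℝ E = Fintype.card (Fin (n + 1)) := by rw [hn, Fintype.card_fin]
  rw [forall_ne_zero_inner_pos_iff_forall_norm_eq_one]
  constructor
  · intro h u hu
    obtain ⟨b, hb⟩ := exists_orthonormalBasis_apply_eq hcard
      (Function.injective_of_subsingleton fun _ : Unit ↦ (0 : Fin (n + 1)))
      (v := fun _ ↦ u) ⟨fun _ ↦ hu, Subsingleton.pairwise⟩
    rw [← hb (), ← sum_inner_orthonormalBasis_succ]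
    exact h _ (b.orthonormal.comp _ (Fin.succ_injective n))
  · intro h v hv
    obtain ⟨b, hb⟩ := exists_orthonormalBasis_apply_eq hcard (Fin.succ_injective n) hv
    simp only [← hb, sum_inner_orthonormalBasis_succ]
    exact h (b 0) (b.norm_eq_one 0)

end SumOfQuadraticForm

section Compression

variable {𝕜 E : Type*} [RCLike 𝕜] [NormedAddCommGroup E] [InnerProductSpace 𝕜 E]

/-- The compression `P_U ∘ T|_U` of an endomorphism `T` to a subspace `U`, where `P_U` is the
orthogonal projection onto `U`; it carries the restriction to `U` of the quadratic form of `T`. -/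
def compression (U : Submodule 𝕜 E) [U.HasOrthogonalProjection] (T : E →ₗ[𝕜] E) : U →ₗ[𝕜] U :=
  U.orthogonalProjectionOnto.toLinearMap ∘ₗ T ∘ₗ U.subtype

lemma inner_compression (U : Submodule 𝕜 E) [U.HasOrthogonalProjection] (T : E →ₗ[𝕜] E)
    (x y : U) : inner 𝕜 (compression U T x) y = inner 𝕜 (T x) (y : E) :=
  U.inner_orthogonalProjectionOnto_eq_of_mem_right y (T x)

lemma compression_id (U : Submodule 𝕜 E) [U.HasOrthogonalProjection] :
    compression U LinearMap.id = LinearMap.id := by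
  ext x
  simp [compression]

variable [FiniteDimensional 𝕜 E]

lemma trace_compression (U : Submodule 𝕜 E) (T : E →ₗ[𝕜] E) :
    trace 𝕜 U (compression U T) = trace 𝕜 E (U.starProjection.toLinearMap ∘ₗ T) := by
  rw [compression, ← LinearMap.comp_assoc, trace_comp_comm']
  rfl

variable {J : E →ₗ[𝕜] E}

lemma starProjection_eigenspace_one (hJ : J.IsSymmetric) (hJJ : Function.Involutive J) (x : E) :
    (End.eigenspace J 1).starProjection x = (2⁻¹ : 𝕜) • (x + J x) := by
  apply Submodule.eq_starProjection_of_mem_of_inner_eq_zero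
  · simp [hJJ x, add_comm]
  · intro w hw
    have hw_fixed : J w = w := by simpa using hw
    have hinner : inner 𝕜 (J x) w = inner 𝕜 x w := by rw [hJ x w, hw_fixed]
    rw [inner_sub_left, inner_smul_left, inner_add_left, hinner, map_inv₀, map_ofNat]
    ring

lemma trace_compression_eigenspace_one (hJ : J.IsSymmetric) (hJJ : Function.Involutive J)
    (T : E →ₗ[𝕜] E) :
    trace 𝕜 _ (compression (End.eigenspace J 1) T) =
      2⁻¹ * (trace 𝕜 E T + trace 𝕜 E (J ∘ₗ T)) := by
  have hproj : (End.eigenspace J 1).starProjection.toLinearMap ∘ₗ T = (2⁻¹ : 𝕜) • (T + J ∘ₗ T) :=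
    LinearMap.ext fun x ↦ starProjection_eigenspace_one hJ hJJ (T x)
  rw [trace_compression, hproj, map_smul, map_add, smul_eq_mul]

lemma finrank_eigenspace_one (hJ : J.IsSymmetric) (hJJ : Function.Involutive J) :
    (finrank 𝕜 (End.eigenspace J 1) : 𝕜) = 2⁻¹ * (finrank 𝕜 E + trace 𝕜 E J) := by
  rw [← trace_id 𝕜 (End.eigenspace J 1), ← trace_id 𝕜 E, ← compression_id,
    trace_compression_eigenspace_one hJ hJJ, LinearMap.comp_id]

lemma trace_eq_sum_apply_single {ι : Type*} [Fintype ι] [DecidableEq ι]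
    (T : EuclideanSpace 𝕜 ι →ₗ[𝕜] EuclideanSpace 𝕜 ι) :
    trace 𝕜 _ T = ∑ k, T (EuclideanSpace.single k 1) k := by
  simp [trace_eq_sum_inner T (EuclideanSpace.basisFun ι 𝕜), EuclideanSpace.inner_single_left]

end Compression

section SelfDual

/-- `Λ²ℝ⁴` as an inner product space: the type `L6` carries the sup norm, so its Euclidean copy is
needed to speak of orthonormal families and orthogonal projections. -/
abbrev TwoForm := EuclideanSpace ℝ (Fin 6)

/-- The Hodge star as a linear endomorphism of the Euclidean space `Λ²ℝ⁴`. -/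
def hodgeEnd : TwoForm →ₗ[ℝ] TwoForm where
  toFun w := WithLp.toLp 2 (hodge w.ofLp)
  map_add' v w := by
    ext k
    fin_cases k <;> simp [hodge, add_comm]
  map_smul' c w := by
    ext k
    fin_cases k <;> simp [hodge]

/-- The endomorphism of the Euclidean space `Λ²ℝ⁴` with matrix `A`. -/
def opEnd (A : M6) : TwoForm →ₗ[ℝ] TwoForm := Matrix.toEuclideanLin (Matrix.of A)

/-- The space `Λ²₊` of self-dual 2-forms. -/
abbrev selfDualForms : Submodule ℝ TwoForm := End.eigenspace hodgeEnd 1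

lemma mem_selfDualForms {w : TwoForm} : w ∈ selfDualForms ↔ SelfDual w.ofLp := by
  rw [End.mem_eigenspace_iff, one_smul, SelfDual, ← (WithLp.ofLp_injective 2).eq_iff]
  rfl

lemma inner_eq_ip6 (v w : TwoForm) : inner ℝ v w = ip6 v.ofLp w.ofLp := by
  simp [ip6, PiLp.inner_apply, mul_comm]

lemma ip6_hodge_left (v w : L6) : ip6 (hodge v) w = ip6 v (hodge w) := by
  simp only [ip6, hodge, Fin.sum_univ_six, Matrix.cons_val]
  ring

lemma hodgeEnd_isSymmetric : hodgeEnd.IsSymmetric := fun v w ↦ by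
  rw [inner_eq_ip6, inner_eq_ip6]
  exact ip6_hodge_left v.ofLp w.ofLp

lemma hodgeEnd_involutive : Function.Involutive hodgeEnd := fun w ↦ by
  ext k
  fin_cases k <;> simp [hodgeEnd, hodge]

lemma trace_hodgeEnd : trace ℝ TwoForm hodgeEnd = 0 := by
  simp [trace_eq_sum_apply_single, hodgeEnd, hodge, Fin.sum_univ_six]

lemma finrank_selfDualForms : finrank ℝ selfDualForms = 3 := by
  have h : (finrank ℝ selfDualForms : ℝ) = 2⁻¹ * ((6 : ℕ) + 0) := by
    rw [finrank_eigenspace_one hodgeEnd_isSymmetric hodgeEnd_involutive, trace_hodgeEnd,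
      finrank_euclideanSpace_fin]
  norm_num at h
  exact_mod_cast h

lemma trace_opEnd (A : M6) : trace ℝ TwoForm (opEnd A) = scal A / 2 := by
  simp [trace_eq_sum_apply_single, opEnd, scal]

lemma trace_hodgeEnd_comp_opEnd (A : M6) :
    trace ℝ TwoForm (hodgeEnd ∘ₗ opEnd A) =
      A 5 0 - A 4 1 + A 3 2 + A 2 3 - A 1 4 + A 0 5 := by
  simp [trace_eq_sum_apply_single, opEnd, hodgeEnd, hodge, Fin.sum_univ_six, sub_eq_add_neg]

lemma Bianchi.trace_hodgeEnd_comp_opEnd_eq_zero {A : M6} (hA : Bianchi A) :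
    trace ℝ TwoForm (hodgeEnd ∘ₗ opEnd A) = 0 := by
  -- The four permutations of the basis form the Klein four-group; the resulting identities add up
  -- to `2 tr (* ∘ A) = 0`.
  have h₀ : A 5 0 - A 4 1 + A 2 3 = 0 := by
    simpa [ip6, appM, wedge, pr, std4, Fin.sum_univ_six, sub_eq_add_neg]
      using hA (std4 0) (std4 1) (std4 2) (std4 3)
  have h₁ : A 5 0 - A 1 4 + A 3 2 = 0 := by
    simpa [ip6, appM, wedge, pr, std4, Fin.sum_univ_six, sub_eq_add_neg]
      using hA (std4 1) (std4 0) (std4 3) (std4 2)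
  have h₂ : A 0 5 - A 4 1 + A 3 2 = 0 := by
    simpa [ip6, appM, wedge, pr, std4, Fin.sum_univ_six, sub_eq_add_neg]
      using hA (std4 2) (std4 3) (std4 0) (std4 1)
  have h₃ : A 0 5 - A 1 4 + A 2 3 = 0 := by
    simpa [ip6, appM, wedge, pr, std4, Fin.sum_univ_six, sub_eq_add_neg]
      using hA (std4 3) (std4 2) (std4 1) (std4 0)
  rw [trace_hodgeEnd_comp_opEnd]
  linarith

lemma trace_compression_selfDualForms {A : M6}
    (hA : trace ℝ TwoForm (hodgeEnd ∘ₗ opEnd A) = 0) :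
    trace ℝ selfDualForms (compression selfDualForms (opEnd A)) = scal A / 4 := by
  rw [trace_compression_eigenspace_one hodgeEnd_isSymmetric hodgeEnd_involutive, hA, trace_opEnd]
  ring

end SelfDual

section Weyl

lemma ip6_eq_dotProduct (v w : L6) : ip6 v w = v ⬝ᵥ w := rfl

lemma ip6_pplus_left {η : L6} (hη : SelfDual η) (w : L6) : ip6 (pplus w) η = ip6 w η := by
  have h : ip6 (hodge w) η = ip6 w η := by rw [ip6_hodge_left, hη]
  simp only [ip6_eq_dotProduct, pplus, smul_dotProduct, add_dotProduct, smul_eq_mul] at h ⊢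
  rw [h]
  ring

lemma ip6_Wplus_self (A : M6) {η : L6} (hη : SelfDual η) :
    ip6 (Wplus A η) η = ip6 (appM A η) η - scal A / 12 * ip6 η η := by
  rw [← ip6_pplus_left hη (appM A η)]
  simp only [ip6_eq_dotProduct, Wplus, sub_dotProduct, smul_dotProduct, smul_eq_mul]

lemma forall_selfDualForms {p : L6 → Prop} :
    (∀ x : selfDualForms, p (x : TwoForm).ofLp) ↔ ∀ η, SelfDual η → p η :=
  ⟨fun h η hη ↦ h ⟨WithLp.toLp 2 η, mem_selfDualForms.2 hη⟩,
    fun h x ↦ h _ (mem_selfDualForms.1 x.2)⟩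

lemma inner_compression_opEnd_self (A : M6) (x : selfDualForms) :
    inner ℝ (compression selfDualForms (opEnd A) x) x =
      ip6 (appM A (x : TwoForm).ofLp) (x : TwoForm).ofLp := by
  rw [inner_compression, inner_eq_ip6]
  rfl

lemma PICp_iff_forall_orthonormal (A : M6) :
    PICp A ↔ ∀ v : Fin 2 → selfDualForms, Orthonormal ℝ v →
      0 < ∑ i, inner ℝ (compression selfDualForms (opEnd A) (v i)) (v i) := by
  simp only [orthonormal_fin_two_iff, Fin.sum_univ_two, inner_compression_opEnd_self]
  simp only [Submodule.coe_inner, inner_eq_ip6]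
  constructor
  · rintro h v ⟨h₀, h₁, h₀₁⟩
    exact h _ _ (mem_selfDualForms.1 (v 0).2) (mem_selfDualForms.1 (v 1).2) h₀ h₁ h₀₁
  · intro h η ζ hη hζ hηη hζζ hηζ
    exact h ![⟨WithLp.toLp 2 η, mem_selfDualForms.2 hη⟩, ⟨WithLp.toLp 2 ζ, mem_selfDualForms.2 hζ⟩]
      ⟨hηη, hζζ, hηζ⟩

lemma forall_weylPlus_pos_iff_forall_compression (A : M6) :
    (∀ η : L6, SelfDual η → η ≠ 0 → 0 < scal A / 6 * ip6 η η - ip6 (Wplus A η) η) ↔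
      ∀ x : selfDualForms, x ≠ 0 →
        0 < scal A / 4 * inner ℝ x x -
          inner ℝ (compression selfDualForms (opEnd A) x) x := by
  rw [← forall_selfDualForms (p := fun η ↦ η ≠ 0 → _)]
  refine forall_congr' fun x ↦ ?_
  have hne : (x : TwoForm).ofLp ≠ 0 ↔ x ≠ 0 := by simp
  rw [hne, ip6_Wplus_self A (mem_selfDualForms.1 x.2), inner_compression_opEnd_self,
    Submodule.coe_inner, inner_eq_ip6]
  ring_nf

end Weyl

theorem two_positive_iff_scal_six_sub_weylPlus_pos_general (A : M6)
    (hA : trace ℝ TwoForm (hodgeEnd ∘ₗ opEnd A) = 0) :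
    PICp A ↔ ∀ η : L6, SelfDual η → η ≠ 0 →
      0 < scal A / 6 * ip6 η η - ip6 (Wplus A η) η := by
  rw [PICp_iff_forall_orthonormal, forall_orthonormal_sum_inner_pos_iff finrank_selfDualForms,
    trace_compression_selfDualForms hA, forall_weylPlus_pos_iff_forall_compression]

/-- 2-positivity of `η ↦ ⟨Rη,η⟩` on `Λ²₊` is equivalent to
`(scal(R)/6)|η|² − ⟨W₊η,η⟩ > 0` for all nonzero `η ∈ Λ²₊`. -/
theorem two_positive_iff_scal_six_sub_weylPlus_pos (A : M6) (hA : IsCurvOp A) :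
    (∀ η ζ : L6, SelfDual η → SelfDual ζ → ip6 η η = 1 → ip6 ζ ζ = 1 →
      ip6 η ζ = 0 → 0 < ip6 (appM A η) η + ip6 (appM A ζ) ζ) ↔
    (∀ η : L6, SelfDual η → η ≠ 0 →
      0 < scal A / 6 * ip6 η η - ip6 (Wplus A η) η) :=
  two_positive_iff_scal_six_sub_weylPlus_pos_general A hA.2.trace_hodgeEnd_comp_opEnd_eq_zero
end
end

section
/- If an algebraic curvature operator R on ℝ⁴ is PIC₊, then its scalar curvature is positive: scal(R) > 0. -/
/-! Any two values of the quadratic form of `R` on an orthonormal basis of `Λ²₊` have a positive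
sum, so the sum of all three is positive. That sum is the trace of `R` compressed to `Λ²₊`, namely
`(tr R + tr (* ∘ R)) / 2`, and it equals `scal R / 4` because the first Bianchi identity forces
`tr (* ∘ R) = 0`. -/

noncomputable section

open scoped ComplexConjugate

theorem sum_pos_of_pairwise_add_pos {ι M : Type*} [Fintype ι] [Nontrivial ι] [AddCommMonoid M]
    [LinearOrder M] [IsOrderedAddMonoid M] {q : ι → M}
    (hq : Pairwise fun i j => 0 < q i + q j) : 0 < ∑ i, q i := by
  classical
  obtain ⟨i, hi⟩ := Finite.exists_min q
  obtain ⟨j, hji⟩ := exists_ne i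
  have nonneg_of_ne : ∀ k ≠ i, 0 ≤ q k := fun k hk => by
    by_contra! hneg
    exact (hq hk).not_ge (add_nonpos hneg.le ((hi k).trans hneg.le))
  calc
    0 < q i + q j := hq hji.symm
    _ ≤ q i + ∑ k ∈ Finset.univ.erase i, q k := by
      gcongr
      exact Finset.single_le_sum (fun k hk => nonneg_of_ne k (Finset.ne_of_mem_erase hk))
        (Finset.mem_erase.mpr ⟨hji, Finset.mem_univ j⟩)
    _ = ∑ k, q k := Finset.add_sum_erase _ _ (Finset.mem_univ i)

theorem PICp.sum_ip6_appM_pos {A : M6} (hA : PICp A) {ι : Type*} [Fintype ι] [DecidableEq ι]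
    [Nontrivial ι] {b : ι → L6} (hb : ∀ i, SelfDual (b i))
    (hortho : ∀ i j, ip6 (b i) (b j) = if i = j then 1 else 0) :
    0 < ∑ i, ip6 (appM A (b i)) (b i) :=
  sum_pos_of_pairwise_add_pos fun i j hij =>
    hA _ _ (hb i) (hb j) (by simp [hortho]) (by simp [hortho]) (by simp [hortho, hij])

theorem hodge_hodge (w : L6) : hodge (hodge w) = w := by
  ext k; fin_cases k <;> simp [hodge]

theorem hodge_add (v w : L6) : hodge (v + w) = hodge v + hodge w := by
  ext k; fin_cases k <;> simp [hodge, add_comm]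

theorem hodge_smul (c : ℝ) (w : L6) : hodge (c • w) = c • hodge w := by
  ext k; fin_cases k <;> simp [hodge]

theorem SelfDual.smul {w : L6} (hw : SelfDual w) (c : ℝ) : SelfDual (c • w) := by
  rw [SelfDual, hodge_smul, hw]

theorem pplus_apply (w : L6) (k : Fin 6) : pplus w k = (w k + hodge w k) / 2 := by
  simp only [pplus, Pi.smul_apply, Pi.add_apply, smul_eq_mul]
  ring

theorem selfDual_pplus (w : L6) : SelfDual (pplus w) := by
  rw [SelfDual, pplus, hodge_smul, hodge_add, hodge_hodge, add_comm]

/-- The orthonormal basis `√2 P₊(e₁ ∧ e₂), √2 P₊(e₁ ∧ e₃), √2 P₊(e₁ ∧ e₄)` of `Λ²₊`, over which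
the trace of an operator compressed to `Λ²₊` is computed. -/
def selfDualBasis (i : Fin 3) : L6 := √2 • pplus (wedge (std4 0) (std4 i.succ))

theorem selfDual_selfDualBasis (i : Fin 3) : SelfDual (selfDualBasis i) :=
  (selfDual_pplus _).smul _

theorem ip6_smul_smul (c : ℝ) (v w : L6) : ip6 (c • v) (c • w) = c ^ 2 * ip6 v w := by
  simp only [ip6, Pi.smul_apply, smul_eq_mul, Finset.mul_sum]
  exact Finset.sum_congr rfl fun k _ => by ring

theorem ip6_pplus_pplus (v w : L6) :
    ip6 (pplus v) (pplus w) = (ip6 v w + ip6 v (hodge w)) / 2 := by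
  simp only [ip6, pplus_apply, hodge, Fin.sum_univ_six, Matrix.cons_val_zero,
    Matrix.cons_val_one, Matrix.cons_val]
  ring

theorem ip6_wedge_wedge (x y z t : V4) :
    ip6 (wedge x y) (wedge z t) = ip4 x z * ip4 y t - ip4 x t * ip4 y z := by
  simp only [ip6, ip4, wedge, pr, Fin.sum_univ_six, Fin.sum_univ_four, Matrix.cons_val_zero,
    Matrix.cons_val_one, Matrix.cons_val]
  ring

theorem ip6_wedge_hodge_wedge_left (x y z : V4) : ip6 (wedge x y) (hodge (wedge x z)) = 0 := by
  simp only [ip6, hodge, wedge, pr, Fin.sum_univ_six, Matrix.cons_val_zero,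
    Matrix.cons_val_one, Matrix.cons_val]
  ring

theorem ip4_std4 (i j : Fin 4) : ip4 (std4 i) (std4 j) = if i = j then 1 else 0 := by
  simp [ip4, std4, eq_comm]

theorem ip6_selfDualBasis (i j : Fin 3) :
    ip6 (selfDualBasis i) (selfDualBasis j) = if i = j then 1 else 0 := by
  rw [selfDualBasis, selfDualBasis, ip6_smul_smul, Real.sq_sqrt zero_le_two, ip6_pplus_pplus,
    ip6_wedge_hodge_wedge_left, ip6_wedge_wedge]
  simp [ip4_std4, mul_div_cancel₀]

/-- The trace of `* ∘ A`: the column `A _ k` is the image under `A` of the `k`-th basis vector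
of `Λ²ℝ⁴`. -/
def hodgeTrace (A : M6) : ℝ := ∑ k, hodge (fun l => A l k) k

theorem wedge_std4_zero_succ (i : Fin 3) :
    wedge (std4 0) (std4 i.succ) = Pi.single (Fin.castLE (by decide) i) 1 := by
  ext k
  fin_cases i <;> fin_cases k <;> simp [wedge, pr, std4]

theorem appM_smul (A : M6) (c : ℝ) (w : L6) : appM A (c • w) = c • appM A w := by
  ext k
  simp only [appM, Pi.smul_apply, smul_eq_mul, Finset.mul_sum, mul_left_comm]

theorem sum_ip6_appM_selfDualBasis (A : M6) :
    ∑ i, ip6 (appM A (selfDualBasis i)) (selfDualBasis i) = (∑ k, A k k + hodgeTrace A) / 2 := by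
  simp only [selfDualBasis, appM_smul, ip6_smul_smul, Real.sq_sqrt zero_le_two,
    wedge_std4_zero_succ]
  simp only [ip6, appM, pplus_apply, hodge, hodgeTrace, Fin.sum_univ_six, Fin.sum_univ_three,
    Matrix.cons_val_zero, Matrix.cons_val_one, Matrix.cons_val, Fin.castLE_zero, Fin.reduceCastLE,
    Pi.single_eq_same, ne_eq, Fin.reduceEq, not_false_eq_true, Pi.single_eq_of_ne, one_ne_zero,
    zero_ne_one]
  ring

theorem hodgeTrace_eq (A : M6) :
    hodgeTrace A = A 5 0 - A 4 1 + A 3 2 + A 2 3 - A 1 4 + A 0 5 := by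
  simp [hodgeTrace, hodge, Fin.sum_univ_six, sub_eq_add_neg]

theorem Bianchi.hodgeTrace_eq_zero {A : M6} (hA : Bianchi A) : hodgeTrace A = 0 := by
  have bianchi₀ : A 0 5 - A 1 4 + A 2 3 = 0 := by
    simpa [ip6, appM, wedge, pr, std4, Fin.sum_univ_six, sub_eq_add_neg]
      using hA (std4 3) (std4 2) (std4 1) (std4 0)
  have bianchi₁ : A 0 5 - A 4 1 + A 3 2 = 0 := by
    simpa [ip6, appM, wedge, pr, std4, Fin.sum_univ_six, sub_eq_add_neg]
      using hA (std4 2) (std4 3) (std4 0) (std4 1)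
  have bianchi₂ : A 5 0 - A 1 4 + A 3 2 = 0 := by
    simpa [ip6, appM, wedge, pr, std4, Fin.sum_univ_six, sub_eq_add_neg]
      using hA (std4 1) (std4 0) (std4 3) (std4 2)
  have bianchi₃ : A 5 0 - A 4 1 + A 2 3 = 0 := by
    simpa [ip6, appM, wedge, pr, std4, Fin.sum_univ_six, sub_eq_add_neg]
      using hA (std4 0) (std4 1) (std4 2) (std4 3)
  rw [hodgeTrace_eq]
  linarith

/-- a PIC₊ algebraic curvature operator has positive scalar
curvature. -/
theorem scal_pos_of_picPlus (A : M6) (hA : IsCurvOp A) (hpic : PICp A) :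
    0 < scal A := by
  have trace_pos := hpic.sum_ip6_appM_pos selfDual_selfDualBasis ip6_selfDualBasis
  rw [sum_ip6_appM_selfDualBasis, hA.2.hodgeTrace_eq_zero] at trace_pos
  unfold scal
  linarith
end
end
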